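/- arXiv:2404.07311 — 2 statements merged into one kernel-verified Lean document; each statement's English description precedes it below -/
import Mathlib

section
/- With Λ^(q) the q×q matrix whose columns are α_1,…,α_{q−2}, β_1, β_2 (in this order), one has (Λ^(q))ᵀ·M^(q)·Λ^(q) = D^(q), where D^(q) is the diagonal matrix diag(1, 1, …, 1, m_1, m_2) whose first q−2 diagonal entries equal 1 and whose last two diagonal entries are m_1 = λ_1 + 1 and m_2 = λ_2 + 1. -/
open Real Finset Matrix

noncomputable section

/-- `λ_j = ((μ−1) + (−1)^{j+1}·√(μ²−(4/q−2)μ+1))/2` for `j ∈ {1,2}`. -/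
def lamJ (q : ℕ) (μ : ℝ) (j : ℕ) : ℝ :=
  ((μ - 1) + (-1 : ℝ) ^ (j + 1) * Real.sqrt (μ ^ 2 - (4 / (q : ℝ) - 2) * μ + 1)) / 2

/-- `m_j = λ_j + 1`. -/
def mJ (q : ℕ) (μ : ℝ) (j : ℕ) : ℝ := lamJ q μ j + 1

/-- `x_j = 1 − q·m_j`. -/
def xJ (q : ℕ) (μ : ℝ) (j : ℕ) : ℝ := 1 - (q : ℝ) * mJ q μ j

/-- `α_i ∈ ℝ^q` (1-based `i` and 1-based coordinate index as in the paper). -/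
def alphaVec (q i : ℕ) : Fin q → ℝ :=
  fun k => (Real.sqrt ((i : ℝ) * ((i : ℝ) + 1)))⁻¹ *
    (if (k : ℕ) + 1 < i + 1 then 1
     else if (k : ℕ) + 1 = i + 1 then -(i : ℝ)
     else 0)

/-- `β_j ∈ ℝ^q`, with `β_{j,k} = (q−1+x_j²)^{−1/2}·(1 if k ≠ q; x_j if k = q)`. -/
def betaVec (q : ℕ) (μ : ℝ) (j : ℕ) : Fin q → ℝ :=
  fun k => (Real.sqrt ((q : ℝ) - 1 + xJ q μ j ^ 2))⁻¹ *
    (if (k : ℕ) + 1 = q then xJ q μ j else 1)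

/-- The matrix `Λ^(q)` whose columns are `α_1, …, α_{q−2}, β_1, β_2` in this order. -/
def LambdaMat (q : ℕ) (μ : ℝ) : Matrix (Fin q) (Fin q) ℝ :=
  Matrix.of fun k c =>
    if (c : ℕ) < q - 2 then alphaVec q ((c : ℕ) + 1) k
    else if (c : ℕ) = q - 2 then betaVec q μ 1 k
    else betaVec q μ 2 k

/-- The matrix `M^(q)` with entries `M_{ij} = δ_{ij} − 1/q + μ·δ_{iq}δ_{jq}`. -/
def Mmat (q : ℕ) (μ : ℝ) : Matrix (Fin q) (Fin q) ℝ :=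
  Matrix.of fun i j =>
    (if i = j then (1 : ℝ) else 0) - 1 / (q : ℝ)
      + if (i : ℕ) + 1 = q ∧ (j : ℕ) + 1 = q then μ else 0

/-- The diagonal matrix `D^(q) = diag(1, …, 1, m_1, m_2)` whose first `q−2`
diagonal entries equal `1` and whose last two diagonal entries are `m_1` and `m_2`. -/
def Dmat (q : ℕ) (μ : ℝ) : Matrix (Fin q) (Fin q) ℝ :=
  Matrix.diagonal fun k =>
    if (k : ℕ) < q - 2 then 1
    else if (k : ℕ) = q - 2 then mJ q μ 1
    else mJ q μ 2

lemma aux_alpha_sum (i : ℕ) (g : ℕ → ℝ) (r : ℕ) :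
    ∑ k ∈ Finset.range (i + 1 + r), (if k + 1 < i + 1 then (1 : ℝ)
     else if k + 1 = i + 1 then -(i : ℝ) else 0) * g k
     = ∑ k ∈ Finset.range i, g k - i * g i := by
  induction r with
  | zero =>
    rw [add_zero, Finset.sum_range_succ]
    have : ∑ k ∈ Finset.range i, (if k + 1 < i + 1 then (1 : ℝ)
     else if k + 1 = i + 1 then -(i : ℝ) else 0) * g k = ∑ k ∈ Finset.range i, g k := by
      apply Finset.sum_congr rfl
      intro k hk
      have := Finset.mem_range.1 hk
      rw [if_pos (by omega), one_mul]
    rw [this]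
    simp
    ring
  | succ r ih =>
    rw [← add_assoc, Finset.sum_range_succ, ih, if_neg (by omega), if_neg (by omega)]
    ring

lemma aux_alpha_sum_fin (q i : ℕ) (hi : i < q) (g : ℕ → ℝ) :
    ∑ k : Fin q, alphaVec q i k * g k
     = (Real.sqrt ((i : ℝ) * ((i : ℝ) + 1)))⁻¹ * (∑ k ∈ Finset.range i, g k - i * g i) := by
  obtain ⟨r, rfl⟩ := Nat.exists_eq_add_of_le (Nat.succ_le_of_lt hi)
  have := aux_alpha_sum i g r
  rw [← this, Finset.mul_sum, Finset.sum_range]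
  apply Finset.sum_congr rfl
  intro k _
  simp only [alphaVec]
  ring

lemma aux_alpha_const (q i : ℕ) (hi : i < q) (g : ℕ → ℝ) (C : ℝ) (h : ∀ k, k ≤ i → g k = C) :
    ∑ k : Fin q, alphaVec q i k * g k = 0 := by
  rw [aux_alpha_sum_fin q i hi g, h i le_rfl,
    Finset.sum_congr rfl (fun k hk => h k (Finset.mem_range.1 hk).le)]
  simp

lemma aux_alpha_lt (q i j : ℕ) (hi : i < q) (hij : i < j) :
    ∑ k : Fin q, alphaVec q i k * alphaVec q j k = 0 := by
  have := aux_alpha_const q i hi (fun k => (Real.sqrt ((j : ℝ) * ((j : ℝ) + 1)))⁻¹ *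
    (if k + 1 < j + 1 then 1 else if k + 1 = j + 1 then -(j : ℝ) else 0))
    ((Real.sqrt ((j : ℝ) * ((j : ℝ) + 1)))⁻¹ * 1)
    (by intro k hk; rw [if_pos (by omega)])
  exact this

lemma aux_alpha_self (q i : ℕ) (hi : i < q) (h0 : 0 < i) :
    ∑ k : Fin q, alphaVec q i k * alphaVec q i k = 1 := by
  have := aux_alpha_sum_fin q i hi (fun k => (Real.sqrt ((i : ℝ) * ((i : ℝ) + 1)))⁻¹ *
    (if k + 1 < i + 1 then 1 else if k + 1 = i + 1 then -(i : ℝ) else 0))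
  have h2 : ∑ k ∈ Finset.range i, (Real.sqrt ((i : ℝ) * ((i : ℝ) + 1)))⁻¹ *
    (if k + 1 < i + 1 then 1 else if k + 1 = i + 1 then -(i : ℝ) else 0)
    = i * (Real.sqrt ((i : ℝ) * ((i : ℝ) + 1)))⁻¹ := by
    rw [Finset.sum_congr rfl (g := fun _ => (Real.sqrt ((i : ℝ) * ((i : ℝ) + 1)))⁻¹)]
    · simp
    · intro k hk
      have := Finset.mem_range.1 hk
      rw [if_pos (by omega), mul_one]
  refine Eq.trans this ?_
  simp only [h2]
  have hp : (0 : ℝ) < i := by exact_mod_cast h0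
  have hs : Real.sqrt ((i : ℝ) * ((i : ℝ) + 1)) ^ 2 = i * (i + 1) := Real.sq_sqrt (by positivity)
  have hs0 : Real.sqrt ((i : ℝ) * ((i : ℝ) + 1)) ≠ 0 := by positivity
  simp
  field_simp
  rw [Real.sq_sqrt (by positivity), Real.sq_sqrt (by positivity)]
  ring

lemma aux_alpha_beta (q i : ℕ) (hi : i + 1 < q) (μ : ℝ) (j : ℕ) :
    ∑ k : Fin q, alphaVec q i k * betaVec q μ j k = 0 := by
  have := aux_alpha_const q i (by omega)
    (fun k => (Real.sqrt ((q : ℝ) - 1 + xJ q μ j ^ 2))⁻¹ *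
    (if k + 1 = q then xJ q μ j else 1))
    ((Real.sqrt ((q : ℝ) - 1 + xJ q μ j ^ 2))⁻¹ * 1)
    (by intro k hk; rw [if_neg (by omega)])
  exact this

lemma aux_ite_sum (q : ℕ) (hq : 1 ≤ q) (A B : ℝ) :
    ∑ k : Fin q, (if (k : ℕ) + 1 = q then A else B) = ((q : ℝ) - 1) * B + A := by
  obtain ⟨n, rfl⟩ := Nat.exists_eq_add_of_le' hq
  rw [Fin.sum_univ_castSucc, Finset.sum_congr rfl (g := fun _ => B)]
  · simp
  · intro k _
    rw [if_neg]
    have := k.2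
    simp
    omega

lemma aux_beta_beta (q : ℕ) (hq : 1 ≤ q) (μ : ℝ) (i j : ℕ) :
    ∑ k : Fin q, betaVec q μ i k * betaVec q μ j k =
      (Real.sqrt ((q : ℝ) - 1 + xJ q μ i ^ 2))⁻¹ * (Real.sqrt ((q : ℝ) - 1 + xJ q μ j ^ 2))⁻¹ *
      ((q : ℝ) - 1 + xJ q μ i * xJ q μ j) := by
  have := aux_ite_sum q hq (xJ q μ i * xJ q μ j) 1
  rw [mul_one] at this
  rw [← this, Finset.mul_sum]
  apply Finset.sum_congr rfl
  intro k _
  simp only [betaVec]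
  split_ifs <;> ring

lemma aux_beta_self (q : ℕ) (hq : 2 ≤ q) (μ : ℝ) (i : ℕ) :
    ∑ k : Fin q, betaVec q μ i k * betaVec q μ i k = 1 := by
  rw [aux_beta_beta q (by omega)]
  have hq' : (2 : ℝ) ≤ q := by exact_mod_cast hq
  have hp : 0 < (q : ℝ) - 1 + xJ q μ i ^ 2 := by nlinarith [sq_nonneg (xJ q μ i)]
  have hs : Real.sqrt ((q : ℝ) - 1 + xJ q μ i ^ 2) ^ 2 = (q : ℝ) - 1 + xJ q μ i ^ 2 :=
    Real.sq_sqrt hp.le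
  have hs0 : Real.sqrt ((q : ℝ) - 1 + xJ q μ i ^ 2) ≠ 0 := (Real.sqrt_pos.2 hp).ne'
  rw [← pow_two (xJ q μ i)]
  rw [← mul_inv, ← pow_two, hs]
  exact inv_mul_cancel₀ hp.ne'

lemma aux_disc (q : ℕ) (hq : 2 ≤ q) (μ : ℝ) (hμ : 0 < μ) :
    0 ≤ μ ^ 2 - (4 / (q : ℝ) - 2) * μ + 1 := by
  have hq' : (2 : ℝ) ≤ q := by exact_mod_cast hq
  have : 4 / (q : ℝ) ≤ 2 := by
    rw [div_le_iff₀ (by linarith)]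
    linarith
  nlinarith

lemma aux_m_quad (q : ℕ) (hq : 2 ≤ q) (μ : ℝ) (hμ : 0 < μ) (j : ℕ) :
    (q : ℝ) * mJ q μ j ^ 2 - q * (1 + μ) * mJ q μ j + μ = 0 := by
  have hs := Real.sq_sqrt (aux_disc q hq μ hμ)
  have hq' : (q : ℝ) ≠ 0 := by positivity
  have hj : ((-1 : ℝ) ^ (j + 1)) ^ 2 = 1 := by
    rw [← pow_mul, mul_comm, pow_mul]; simp
  have h4 : (q : ℝ) * (4 / (q : ℝ)) = 4 := by field_simp
  simp only [mJ, lamJ]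
  generalize Real.sqrt _ = s at *
  generalize (-1 : ℝ) ^ (j + 1) = e at *
  generalize (4 / (q : ℝ)) = t at *
  linear_combination (q : ℝ) / 4 * s ^ 2 * hj + (q : ℝ) / 4 * hs - μ / 4 * h4

lemma aux_beta_12 (q : ℕ) (hq : 2 ≤ q) (μ : ℝ) (hμ : 0 < μ) :
    ∑ k : Fin q, betaVec q μ 1 k * betaVec q μ 2 k = 0 := by
  rw [aux_beta_beta q (by omega)]
  have : (q : ℝ) - 1 + xJ q μ 1 * xJ q μ 2 = 0 := by
    have hs := aux_m_quad q hq μ hμ 1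
    have h12 : mJ q μ 2 = 1 + μ - mJ q μ 1 := by
      simp only [mJ, lamJ]; ring
    simp only [xJ, h12]
    linear_combination -(q : ℝ) * hs
  rw [this, mul_zero]

lemma aux_mul_M (q : ℕ) (μ : ℝ) (v : Fin q → ℝ) (k : Fin q) :
    ∑ j, Mmat q μ k j * v j =
      v k - (∑ j, v j) / q + if (k : ℕ) + 1 = q then μ * v k else 0 := by
  have h : ∀ j, Mmat q μ k j * v j = (if k = j then v j else 0) - v j / q +
      (if k = j then (if (k : ℕ) + 1 = q then μ * v j else 0) else 0) := by
    intro j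
    simp only [Mmat, Matrix.of_apply]
    by_cases hkj : k = j
    · subst hkj
      simp only [and_self, if_true]
      split_ifs <;> ring
    · have : ¬ ((k : ℕ) + 1 = q ∧ (j : ℕ) + 1 = q) := by
        rintro ⟨h1, h2⟩
        exact hkj (Fin.ext (by omega))
      simp only [hkj, this, if_false]
      ring
  simp only [h, Finset.sum_add_distrib, Finset.sum_sub_distrib, Finset.sum_div]
  simp

lemma aux_eig_alpha (q i : ℕ) (hi : i + 1 < q) (μ : ℝ) (k : Fin q) :
    ∑ j, Mmat q μ k j * alphaVec q i j = alphaVec q i k := by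
  rw [aux_mul_M]
  have h0 := aux_alpha_const q i (by omega) (fun _ => 1) 1 (fun _ _ => rfl)
  simp only [mul_one] at h0
  rw [h0]
  split_ifs with h
  · have : alphaVec q i k = 0 := by
      simp only [alphaVec]
      rw [if_neg (by omega), if_neg (by omega), mul_zero]
    simp [this]
  · simp

lemma aux_eig_beta (q : ℕ) (hq : 2 ≤ q) (μ : ℝ) (hμ : 0 < μ) (i : ℕ) (k : Fin q) :
    ∑ j, Mmat q μ k j * betaVec q μ i j = mJ q μ i * betaVec q μ i k := by
  rw [aux_mul_M]
  have hq' : (q : ℝ) ≠ 0 := by positivity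
  have hm := aux_m_quad q hq μ hμ i
  have h0 : ∑ j, betaVec q μ i j = (Real.sqrt ((q : ℝ) - 1 + xJ q μ i ^ 2))⁻¹ *
      (q - q * mJ q μ i) := by
    simp only [betaVec]
    rw [← Finset.mul_sum, aux_ite_sum q (by omega)]
    simp only [xJ]
    ring
  have h1 : (∑ j, betaVec q μ i j) / q = (Real.sqrt ((q : ℝ) - 1 + xJ q μ i ^ 2))⁻¹ *
      (1 - mJ q μ i) := by
    rw [h0]; field_simp
  rw [h1]
  simp only [betaVec]
  generalize (Real.sqrt ((q : ℝ) - 1 + xJ q μ i ^ 2))⁻¹ = s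
  split_ifs
  · simp only [xJ]
    linear_combination s * hm
  · ring

lemma aux_eig (q : ℕ) (hq : 2 ≤ q) (μ : ℝ) (hμ : 0 < μ) :
    Mmat q μ * LambdaMat q μ = LambdaMat q μ * Dmat q μ := by
  ext k c
  rw [Dmat, Matrix.mul_diagonal, Matrix.mul_apply]
  simp only [LambdaMat, Matrix.of_apply]
  split_ifs
  · rw [aux_eig_alpha q _ (by omega), mul_one]
  · rw [aux_eig_beta q hq μ hμ, mul_comm]
  · rw [aux_eig_beta q hq μ hμ, mul_comm]

lemma aux_gram_off (q : ℕ) (hq : 2 ≤ q) (μ : ℝ) (hμ : 0 < μ) (c d : Fin q) (h : c < d) :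
    ∑ k, LambdaMat q μ k c * LambdaMat q μ k d = 0 := by
  have h' : (c : ℕ) < d := h
  have hd := d.2
  simp only [LambdaMat, Matrix.of_apply]
  by_cases h1 : (c : ℕ) < q - 2
  · simp only [h1, if_true]
    split_ifs
    · exact aux_alpha_lt q _ _ (by omega) (by omega)
    · exact aux_alpha_beta q _ (by omega) μ 1
    · exact aux_alpha_beta q _ (by omega) μ 2
  · have h2 : (c : ℕ) = q - 2 := by omega
    have h3 : ¬ (d : ℕ) < q - 2 := by omega
    have h4 : ¬ (d : ℕ) = q - 2 := by omega
    simp only [h1, h2, h3, h4, if_true, if_false]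
    simpa using aux_beta_12 q hq μ hμ

lemma aux_gram (q : ℕ) (hq : 2 ≤ q) (μ : ℝ) (hμ : 0 < μ) :
    (LambdaMat q μ)ᵀ * LambdaMat q μ = 1 := by
  ext c d
  rw [Matrix.mul_apply]
  simp only [Matrix.transpose_apply]
  rcases lt_trichotomy c d with h | h | h
  · rw [aux_gram_off q hq μ hμ c d h, Matrix.one_apply_ne h.ne]
  · subst h
    rw [Matrix.one_apply_eq]
    simp only [LambdaMat, Matrix.of_apply]
    split_ifs
    · exact aux_alpha_self q _ (by omega) (by omega)
    · exact aux_beta_self q hq μ 1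
    · exact aux_beta_self q hq μ 2
  · rw [Matrix.one_apply_ne h.ne', ← aux_gram_off q hq μ hμ d c h]
    exact Finset.sum_congr rfl fun k _ => mul_comm _ _

/-- Corollary 2 of the paper.
`(Λ^(q))ᵀ·M^(q)·Λ^(q) = D^(q) = diag(1, …, 1, m_1, m_2)`. -/
theorem Lambda_diagonalizes_M
    (q : ℕ) (hq : 2 ≤ q) (μ : ℝ) (hμ : 0 < μ) :
    (LambdaMat q μ)ᵀ * Mmat q μ * LambdaMat q μ = Dmat q μ := by
  rw [Matrix.mul_assoc, aux_eig q hq μ hμ, ← Matrix.mul_assoc, aux_gram q hq μ hμ, Matrix.one_mul]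

end
end

section
/- For every natural number t and every 1 ≤ ℓ ≤ q−1, det(I + t·Q_ℓ) = 1 − μ·t(t−1)·(q−2)/(q−1) − t²·μ²·q(q−2)/(q−1)². -/
open MeasureTheory ProbabilityTheory Real Finset Matrix

noncomputable section

/-- `ω_{m,ℓ} = α_{m,ℓ}` for `1 ≤ m ≤ q−2` and `ω_{m,ℓ} = 0` for `m ∈ {q−1, q}`
(the index `m : Fin q` encodes the paper's 1-based index `m+1`). -/
def omegaVec (q : ℕ) (l : Fin q) : Fin q → ℝ :=
  fun m => if (m : ℕ) < q - 2 then alphaVec q ((m : ℕ) + 1) l else 0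

/-- The matrix `Q_ℓ` with entries
`Q_{ℓ,mm'} = μ ω_{m,ℓ} ω_{m',ℓ} + √μ √(1+μq/(q−1)) (ω_{m,ℓ} δ_{m',q−1} + ω_{m',ℓ} δ_{m,q−1})`. -/
def Qmat (q : ℕ) (μ : ℝ) (l : Fin q) : Matrix (Fin q) (Fin q) ℝ :=
  Matrix.of fun m m' =>
    μ * omegaVec q l m * omegaVec q l m'
    + Real.sqrt μ * Real.sqrt (1 + μ * (q : ℝ) / ((q : ℝ) - 1)) *
      (omegaVec q l m * (if (m' : ℕ) + 1 = q - 1 then 1 else 0)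
        + omegaVec q l m' * (if (m : ℕ) + 1 = q - 1 then 1 else 0))

/-- The matrix `P` with entries `P_{mm'} = (1+μq/(q−1))⁻¹` times:
`μq/(q−1)` if `m=m'=q`; `−μq/(q−1)(2+μq/(q−1))` if `m=m'=q−1`;
`√μ √(q/(q−1))` if `{m,m'} = {q−1,q}`; `0` otherwise. -/
def Pmat (q : ℕ) (μ : ℝ) : Matrix (Fin q) (Fin q) ℝ :=
  Matrix.of fun m m' =>
    (1 + μ * (q : ℝ) / ((q : ℝ) - 1))⁻¹ *
      (if (m : ℕ) + 1 = q ∧ (m' : ℕ) + 1 = q then μ * (q : ℝ) / ((q : ℝ) - 1)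
       else if (m : ℕ) + 1 = q - 1 ∧ (m' : ℕ) + 1 = q - 1 then
         -(μ * (q : ℝ) / ((q : ℝ) - 1)) * (2 + μ * (q : ℝ) / ((q : ℝ) - 1))
       else if ((m : ℕ) + 1 = q ∧ (m' : ℕ) + 1 = q - 1) ∨
               ((m : ℕ) + 1 = q - 1 ∧ (m' : ℕ) + 1 = q) then
         Real.sqrt μ * Real.sqrt ((q : ℝ) / ((q : ℝ) - 1))
       else 0)

theorem aux_sum (l n : ℕ) :
    ∑ m ∈ Finset.range n, ((Real.sqrt (((m + 1 : ℕ) : ℝ) * (((m + 1 : ℕ) : ℝ) + 1)))⁻¹ *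
      (if l + 1 < (m + 1) + 1 then 1
       else if l + 1 = (m + 1) + 1 then -(((m + 1 : ℕ) : ℝ))
       else 0)) ^ 2 = if l ≤ n then (n : ℝ) / (n + 1) else 0 := by
  induction n with
  | zero => simp
  | succ n ih =>
    rw [Finset.sum_range_succ, ih, mul_pow, inv_pow, Real.sq_sqrt (by positivity)]
    have h1 : (n : ℝ) + 1 ≠ 0 := by positivity
    have h2 : (n : ℝ) + 1 + 1 ≠ 0 := by positivity
    rcases lt_trichotomy l (n + 1) with h | h | h
    · rw [if_pos (by omega), if_pos (by omega), if_pos (by omega)]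
      push_cast
      field_simp
      ring
    · rw [if_neg (by omega), if_neg (by omega), if_pos (by omega), if_pos (by omega)]
      push_cast
      field_simp
      ring
    · rw [if_neg (by omega), if_neg (by omega), if_neg (by omega), if_neg (by omega)]
      simp

theorem aux_omega (n : ℕ) (l : Fin (n + 2)) (hl : (l : ℕ) ≤ n) :
    ∑ m, omegaVec (n + 2) l m * omegaVec (n + 2) l m = (n : ℝ) / (n + 1) := by
  have h := aux_sum l n
  rw [if_pos hl] at h
  rw [← h, Fin.sum_univ_castSucc, Fin.sum_univ_castSucc, Finset.sum_range]
  have h1 : omegaVec (n + 2) l (Fin.last (n + 1)) = 0 := by simp [omegaVec]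
  have h2 : omegaVec (n + 2) l (Fin.castSucc (Fin.last n)) = 0 := by simp [omegaVec]
  rw [h1, h2, mul_zero, add_zero, add_zero]
  refine Finset.sum_congr rfl fun m _ => ?_
  rw [← pow_two]
  simp only [omegaVec, alphaVec, Fin.val_castSucc]
  rw [if_pos (by simp)]

/-- second determinant in the Proposition of the paper.
For every natural number `t` and every `1 ≤ ℓ ≤ q−1`,
`det(I + t·Q_ℓ) = 1 − μ t(t−1)(q−2)/(q−1) − t² μ² q(q−2)/(q−1)²`. -/
theorem det_I_add_smul_Q
    (q : ℕ) (hq : 2 ≤ q) (μ : ℝ) (hμ : 0 < μ) (t : ℕ)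
    (l : Fin q) (hl : (l : ℕ) < q - 1) :
    (1 + (t : ℝ) • Qmat q μ l).det
      = 1 - μ * (t : ℝ) * ((t : ℝ) - 1) * ((q : ℝ) - 2) / ((q : ℝ) - 1)
        - (t : ℝ) ^ 2 * μ ^ 2 * (q : ℝ) * ((q : ℝ) - 2) / ((q : ℝ) - 1) ^ 2 := by
  obtain ⟨n, rfl⟩ : ∃ n, q = n + 2 := ⟨q - 2, by omega⟩
  have hs := aux_omega n l (by omega)
  have hn : (0 : ℝ) ≤ n := Nat.cast_nonneg n
  have hn1 : (n : ℝ) + 1 ≠ 0 := by positivity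
  have hq1 : ((n + 2 : ℕ) : ℝ) - 1 = n + 1 := by push_cast; ring
  have hnn : 0 ≤ 1 + μ * ((n + 2 : ℕ) : ℝ) / (((n + 2 : ℕ) : ℝ) - 1) := by
    rw [hq1]; positivity
  obtain ⟨c, hc⟩ : ∃ c : ℝ, c = Real.sqrt μ *
    Real.sqrt (1 + μ * ((n + 2 : ℕ) : ℝ) / (((n + 2 : ℕ) : ℝ) - 1)) := exists_eq
  have hc2 : c ^ 2 = μ * (1 + μ * ((n + 2 : ℕ) : ℝ) / (((n + 2 : ℕ) : ℝ) - 1)) := by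
    rw [hc, mul_pow, Real.sq_sqrt hμ.le, Real.sq_sqrt hnn]
  obtain ⟨w, hw⟩ : ∃ w : Fin (n + 2) → ℝ, w = omegaVec (n + 2) l := exists_eq
  obtain ⟨e, he⟩ : ∃ e : Fin (n + 2) → ℝ,
    e = (fun m : Fin (n + 2) => if (m : ℕ) + 1 = n + 2 - 1 then (1 : ℝ) else 0) := by
    exact ⟨_, rfl⟩
  have hwe : ∑ m, w m * e m = 0 := by
    apply Finset.sum_eq_zero
    intro m _
    rw [hw, he]
    by_cases h : (m : ℕ) + 1 = n + 2 - 1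
    · have : ¬ (m : ℕ) < n + 2 - 2 := by omega
      simp only [omegaVec, if_neg this, zero_mul]
    · simp only [if_neg h, mul_zero]
  have hee : ∑ m, e m * e m = 1 := by
    rw [Finset.sum_eq_single (⟨n, by omega⟩ : Fin (n + 2))]
    · simp [he]
    · intro b _ hb
      have : ¬ (b : ℕ) + 1 = n + 2 - 1 := fun h => hb (Fin.ext (by simp; omega))
      rw [he]
      simp only [if_neg this, mul_zero]
    · simp
  rw [← hw] at hs
  let U : Matrix (Fin (n + 2)) (Fin 2) ℝ := Matrix.of fun m j => ![w m, e m] j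
  let V : Matrix (Fin 2) (Fin (n + 2)) ℝ :=
    Matrix.of fun j m => ![(t : ℝ) * (μ * w m + c * e m), (t : ℝ) * (c * w m)] j
  have hQ : (t : ℝ) • Qmat (n + 2) μ l = U * V := by
    ext m m'
    simp only [Matrix.smul_apply, Qmat, Matrix.of_apply, Matrix.mul_apply, Fin.sum_univ_two, U, V,
      ← hc, ← hw, he, smul_eq_mul, Matrix.cons_val_zero, Matrix.cons_val_one]
    ring
  have h00 : (V * U) 0 0 = t * μ * (n / (n + 1)) := by
    have : (V * U) 0 0 = t * μ * (∑ m, w m * w m) + t * c * ∑ m, w m * e m := by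
      simp only [Matrix.mul_apply, Finset.mul_sum, ← Finset.sum_add_distrib]
      exact Finset.sum_congr rfl fun m _ => by simp [U, V]; ring
    rw [this, hs, hwe]; ring
  have h01 : (V * U) 0 1 = t * c := by
    have : (V * U) 0 1 = t * μ * (∑ m, w m * e m) + t * c * ∑ m, e m * e m := by
      simp only [Matrix.mul_apply, Finset.mul_sum, ← Finset.sum_add_distrib]
      exact Finset.sum_congr rfl fun m _ => by simp [U, V]; ring
    rw [this, hee, hwe]; ring
  have h10 : (V * U) 1 0 = t * c * (n / (n + 1)) := by
    have : (V * U) 1 0 = t * c * (∑ m, w m * w m) := by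
      simp only [Matrix.mul_apply, Finset.mul_sum]
      exact Finset.sum_congr rfl fun m _ => by simp [U, V]; ring
    rw [this, hs]
  have h11 : (V * U) 1 1 = 0 := by
    have : (V * U) 1 1 = t * c * (∑ m, w m * e m) := by
      simp only [Matrix.mul_apply, Finset.mul_sum]
      exact Finset.sum_congr rfl fun m _ => by simp [U, V]; ring
    rw [this, hwe]; ring
  rw [hQ, Matrix.det_one_add_mul_comm, Matrix.det_fin_two]
  simp only [Matrix.add_apply, h00, h01, h10, h11, Matrix.one_apply_eq]
  rw [Matrix.one_apply_ne (by decide), Matrix.one_apply_ne (by decide)]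
  have : (1 + t * μ * ((n : ℝ) / (n + 1))) * (1 + 0) - (0 + t * c) * (0 + t * c * (n / (n + 1)))
    = 1 + t * μ * ((n : ℝ) / (n + 1)) - t ^ 2 * c ^ 2 * (n / (n + 1)) := by ring
  rw [this, hc2, hq1]
  push_cast
  field_simp
  ring

end
end
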